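/- Taylor coefficient bound for the logarithmic part of the Bessel resolvent kernel, integer order (Lemma 7.1 b, first bound): Let n ∈ ℕ and 0 < x ≤ y. Let J_n(z) := (z/2)^n ∑_{k=0}^∞ (−1)^k z^{2k}/(4^k · k! · (k+n)!) be the Bessel function of integer order n, and consider the even entire function g₁(λ) := √(xy) · J_n(λx) · J_n(λy). Let β_{2k} denote the Taylor coefficient of λ^{2k} of g₁ at λ = 0 (so β_{2k} = 0 for k < n). Then for every R > 0 and every k ∈ ℕ₀: |β_{2k}| ≤ R^{−2k} · (xy)^{n+1/2} · (R/2)^{2n} · e^{R(x+y)} / (n!)². -/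

import Mathlib

noncomputable section

/-!
The Taylor coefficients of `g₁` are recovered by integrating `lam ^ (-2k-1) * g₁ lam` over the
circle `‖lam‖ = R`, so it is enough to bound `g₁` there. Since `(2k)! n! ≤ 4 ^ k k! (k + n)!`, the
series of `J_n z / (z / 2) ^ n` is dominated termwise by that of `cosh ‖z‖ / n!`, and
`cosh ‖z‖ ≤ exp ‖z‖`.
-/

open Metric Real Complex
open scoped Nat

section CauchyEstimate

variable {ι : Type*}

theorem hasSum_circleIntegral_of_norm_le [Countable ι] {E : Type*} [NormedAddCommGroup E]
    [NormedSpace ℂ E] {F : ι → ℂ → E} {f : ℂ → E} {u : ι → ℝ} {a : ℂ} {R : ℝ}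
    (hF : ∀ i, CircleIntegrable (F i) a R) (hu : Summable u)
    (hFu : ∀ i, ∀ z ∈ sphere a |R|, ‖F i z‖ ≤ u i)
    (hf : ∀ z ∈ sphere a |R|, HasSum (fun i => F i z) (f z)) :
    HasSum (fun i => ∮ z in C(a, R), F i z) (∮ z in C(a, R), f z) := by
  refine intervalIntegral.hasSum_integral_of_dominated_convergence (fun i _ => |R| * u i)
    (fun i => (hF i).out.def'.aestronglyMeasurable) (fun i => .of_forall fun θ _ => ?_)
    (.of_forall fun _ _ => hu.mul_left _) intervalIntegrable_const
    (.of_forall fun θ _ => (hf _ (circleMap_mem_sphere' a R θ)).const_smul _)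
  have hderiv : ‖deriv (circleMap a R) θ‖ = |R| := by simp
  rw [norm_smul, hderiv]
  gcongr
  exact hFu i _ (circleMap_mem_sphere' a R θ)

theorem circleIntegral_sub_zpow (a : ℂ) {R : ℝ} (hR : R ≠ 0) (m : ℤ) :
    ∮ z in C(a, R), (z - a) ^ m = if m = -1 then 2 * π * I else 0 := by
  split_ifs with hm
  · simpa only [hm, zpow_neg_one] using circleIntegral.integral_sub_center_inv a hR
  · exact circleIntegral.integral_sub_zpow_of_ne hm a a R

variable {e : ι → ℤ} {c : ι → ℂ} {f : ℂ → ℂ} {a : ℂ} {R : ℝ}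

theorem circleIntegral_zpow_mul_eq_of_hasSum (he : Function.Injective e) (hR : 0 < R)
    (hf : ∀ z ∈ sphere a R, HasSum (fun i => c i * (z - a) ^ e i) (f z)) (k : ι) :
    ∮ z in C(a, R), (z - a) ^ (-e k - 1) * f z = 2 * π * I * c k := by
  classical
  have : Countable ι := he.countable
  have hne : ∀ z ∈ sphere a R, z - a ≠ 0 := fun z hz =>
    sub_ne_zero.2 (ne_of_mem_sphere hz hR.ne')
  have hnorm (z : ℂ) (hz : z ∈ sphere a R) (i : ι) :
      ‖c i * (z - a) ^ (e i - e k - 1)‖ = ‖c i‖ * R ^ (e i - e k - 1) := by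
    rw [norm_mul, norm_zpow, mem_sphere_iff_norm.1 hz]
  have hseries (z : ℂ) (hz : z ∈ sphere a R) :
      HasSum (fun i => c i * (z - a) ^ (e i - e k - 1)) ((z - a) ^ (-e k - 1) * f z) := by
    refine ((hf z hz).mul_left _).congr_fun fun i => ?_
    rw [mul_left_comm, ← zpow_add₀ (hne z hz)]
    ring_nf
  have hmajorant : Summable fun i => ‖c i‖ * R ^ (e i - e k - 1) := by
    have hz : a + R ∈ sphere a R := by simp [hR.le]
    simpa only [hnorm _ hz] using (hseries _ hz).summable.norm
  have hintegrable (i : ι) :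
      CircleIntegrable (fun z => c i * (z - a) ^ (e i - e k - 1)) a R :=
    ContinuousOn.circleIntegrable hR.le <| continuousOn_const.mul <|
      (continuousOn_id.sub continuousOn_const).zpow₀ _ fun z hz => .inl (hne z hz)
  have hsum := hasSum_circleIntegral_of_norm_le hintegrable hmajorant
    (by simpa only [abs_of_pos hR] using fun i z hz => (hnorm z hz i).le)
    (by simpa only [abs_of_pos hR] using hseries)
  have hterm (i : ι) : ∮ z in C(a, R), c i * (z - a) ^ (e i - e k - 1) =
      if i = k then 2 * π * I * c k else 0 := by
    have hexp : e i - e k - 1 = -1 ↔ i = k := by simp [sub_eq_zero, he.eq_iff]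
    simp only [circleIntegral.integral_const_mul, circleIntegral_sub_zpow a hR.ne', hexp]
    split_ifs with hik
    · rw [hik, mul_comm]
    · exact mul_zero _
  simp only [hterm] at hsum
  exact hsum.unique (hasSum_ite_eq k _)

theorem norm_coeff_le_of_hasSum_zpow {C : ℝ} (he : Function.Injective e) (hR : 0 < R)
    (hf : ∀ z ∈ sphere a R, HasSum (fun i => c i * (z - a) ^ e i) (f z))
    (hC : ∀ z ∈ sphere a R, ‖f z‖ ≤ C) (k : ι) :
    ‖c k‖ ≤ (R ^ e k)⁻¹ * C := by
  have hcoeff : (2 * π * I : ℂ)⁻¹ • ∮ z in C(a, R), (z - a) ^ (-e k - 1) * f z = c k := by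
    rw [circleIntegral_zpow_mul_eq_of_hasSum he hR hf, smul_eq_mul,
      inv_mul_cancel_left₀ two_pi_I_ne_zero]
  calc ‖c k‖ ≤ R * (R ^ (-e k - 1) * C) := by
        rw [← hcoeff]
        refine circleIntegral.norm_two_pi_i_inv_smul_integral_le_of_norm_le_const hR.le
          fun z hz => ?_
        rw [norm_mul, norm_zpow, mem_sphere_iff_norm.1 hz]
        gcongr
        exact hC z hz
    _ = (R ^ e k)⁻¹ * C := by
        rw [zpow_sub_one₀ hR.ne', zpow_neg]
        field_simp

end CauchyEstimate

section Bessel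

theorem factorial_two_mul_mul_factorial_le (k n : ℕ) : (2 * k)! * n ! ≤ 4 ^ k * k ! * (k + n)! :=
  calc (2 * k)! * n ! = k.centralBinom * k ! * (k ! * n !) := by
        rw [← Nat.choose_mul_factorial_mul_factorial (Nat.le_mul_of_pos_left k two_pos),
          Nat.centralBinom, show 2 * k - k = k by omega]
        ring
    _ ≤ 4 ^ k * k ! * (k + n)! := by
        gcongr
        · exact k.centralBinom_le_four_pow
        · exact Nat.le_of_dvd (k + n).factorial_pos (k.factorial_mul_factorial_dvd_factorial_add n)

theorem cosh_le_exp_of_nonneg {t : ℝ} (ht : 0 ≤ t) : Real.cosh t ≤ Real.exp t := by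
  rw [← Real.cosh_add_sinh]
  exact le_add_of_nonneg_right (Real.sinh_nonneg_iff.2 ht)

/-- The even entire function `h_n(z) = ∑ (-1)^k z^{2k} / (4^k k! (k+n)!)`, that is, the Bessel
function `J_n` with its zero `(z / 2) ^ n` at the origin divided out. -/
def besselSeries (n : ℕ) (z : ℂ) : ℂ :=
  ∑' k : ℕ, ((-1 : ℂ) ^ k * z ^ (2 * k)) / ((4 : ℂ) ^ k * (k ! : ℂ) * ((k + n)! : ℂ))

/-- The Bessel function of the first kind `J_n` of order `n : ℕ`. -/
def besselJ (n : ℕ) (z : ℂ) : ℂ :=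
  (z / 2) ^ n * besselSeries n z

/-- The function `g₁(lam) = √(xy) J_n(lam x) J_n(lam y)`, which up to a constant is the coefficient
of `log lam` in the resolvent kernel of the Bessel operator of order `n`. -/
def besselLogPart (n : ℕ) (x y : ℝ) (lam : ℂ) : ℂ :=
  (√(x * y) : ℂ) * besselJ n (lam * x) * besselJ n (lam * y)

theorem norm_besselSeries_le (n : ℕ) (z : ℂ) : ‖besselSeries n z‖ ≤ Real.cosh ‖z‖ / n ! := by
  refine tsum_of_norm_bounded ((Real.hasSum_cosh ‖z‖).div_const _) fun k => ?_
  have hfactorial : ((2 * k)! * n ! : ℝ) ≤ 4 ^ k * k ! * (k + n)! := mod_cast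
    factorial_two_mul_mul_factorial_le k n
  calc ‖((-1 : ℂ) ^ k * z ^ (2 * k)) / ((4 : ℂ) ^ k * (k ! : ℂ) * ((k + n)! : ℂ))‖
      = ‖z‖ ^ (2 * k) / (4 ^ k * k ! * (k + n)!) := by simp
    _ ≤ ‖z‖ ^ (2 * k) / ((2 * k)! * n !) := by gcongr
    _ = ‖z‖ ^ (2 * k) / (2 * k)! / n ! := (div_div _ _ _).symm

theorem norm_besselJ_le (n : ℕ) (z : ℂ) :
    ‖besselJ n z‖ ≤ (‖z‖ / 2) ^ n * (Real.exp ‖z‖ / n !) :=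
  calc ‖besselJ n z‖ = (‖z‖ / 2) ^ n * ‖besselSeries n z‖ := by simp [besselJ]
    _ ≤ (‖z‖ / 2) ^ n * (Real.cosh ‖z‖ / n !) := by gcongr; exact norm_besselSeries_le n z
    _ ≤ (‖z‖ / 2) ^ n * (Real.exp ‖z‖ / n !) := by
      gcongr; exact cosh_le_exp_of_nonneg (norm_nonneg z)

variable {x y : ℝ}

theorem norm_besselLogPart_le (n : ℕ) (hx : 0 ≤ x) (hy : 0 ≤ y) (lam : ℂ) :
    ‖besselLogPart n x y lam‖ ≤ (x * y) ^ ((n : ℝ) + 1 / 2) * (‖lam‖ / 2) ^ (2 * n) *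
      Real.exp (‖lam‖ * (x + y)) / (n ! : ℝ) ^ 2 := by
  have hJ {t : ℝ} (ht : 0 ≤ t) : ‖besselJ n (lam * t)‖ ≤
      (‖lam‖ * t / 2) ^ n * (Real.exp (‖lam‖ * t) / n !) := by
    simpa only [norm_mul, Complex.norm_of_nonneg ht] using norm_besselJ_le n (lam * t)
  have hpow : (x * y) ^ ((n : ℝ) + 1 / 2) = (x * y) ^ n * √(x * y) := by
    rw [Real.rpow_add_of_nonneg (mul_nonneg hx hy) n.cast_nonneg one_half_pos.le,
      Real.rpow_natCast, Real.sqrt_eq_rpow]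
  calc ‖besselLogPart n x y lam‖
      = √(x * y) * ‖besselJ n (lam * x)‖ * ‖besselJ n (lam * y)‖ := by
        rw [besselLogPart, norm_mul, norm_mul, Complex.norm_of_nonneg (Real.sqrt_nonneg _)]
    _ ≤ √(x * y) * ((‖lam‖ * x / 2) ^ n * (Real.exp (‖lam‖ * x) / n !)) *
          ((‖lam‖ * y / 2) ^ n * (Real.exp (‖lam‖ * y) / n !)) := by
        gcongr
        exacts [hJ hx, hJ hy]
    _ = (x * y) ^ ((n : ℝ) + 1 / 2) * (‖lam‖ / 2) ^ (2 * n) *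
          Real.exp (‖lam‖ * (x + y)) / (n ! : ℝ) ^ 2 := by
        rw [hpow, mul_add, Real.exp_add]
        ring

theorem bessel_log_part_coefficient_bound_general (n : ℕ) (hx : 0 ≤ x) (hy : 0 ≤ y) {R : ℝ}
    (hR : 0 < R) {β : ℕ → ℂ}
    (hβ : ∀ lam ∈ sphere (0 : ℂ) R,
      HasSum (fun k => β k * lam ^ (2 * k)) (besselLogPart n x y lam)) (k : ℕ) :
    ‖β k‖ ≤ (R ^ (2 * k))⁻¹ * (x * y) ^ ((n : ℝ) + 1 / 2) * (R / 2) ^ (2 * n) *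
      Real.exp (R * (x + y)) / (n ! : ℝ) ^ 2 := by
  have hinj : Function.Injective fun j : ℕ => ((2 * j : ℕ) : ℤ) := fun i j hij => by
    simpa using hij
  have hcauchy := norm_coeff_le_of_hasSum_zpow (a := 0) hinj hR
    (by simpa only [sub_zero, zpow_natCast] using hβ)
    (fun lam hlam => mem_sphere_zero_iff_norm.1 hlam ▸ norm_besselLogPart_le n hx hy lam) k
  simpa only [zpow_natCast, mul_assoc, mul_div_assoc] using hcauchy

end Bessel

/-- Taylor coefficient bound for the logarithmic part of the Bessel resolvent kernel,
integer order (Lemma 7.1 b, first bound). -/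
theorem bessel_log_part_coefficient_bound
    (n : ℕ) (hn : 0 < n)
    (x y : ℝ) (hx : 0 < x) (hxy : x ≤ y)
    (Jn : ℂ → ℂ)
    (hJn : ∀ z : ℂ, Jn z = (z / 2) ^ n *
      ∑' k : ℕ, ((-1 : ℂ) ^ k * z ^ (2 * k)) /
        ((4 : ℂ) ^ k * (Nat.factorial k : ℂ) * (Nat.factorial (k + n) : ℂ)))
    (g₁ : ℂ → ℂ)
    (hg₁ : ∀ lam : ℂ, g₁ lam =
      ((Real.sqrt (x * y) : ℝ) : ℂ) * Jn (lam * x) * Jn (lam * y))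
    (β : ℕ → ℂ)
    (hβ : ∀ lam : ℂ, HasSum (fun k : ℕ => β k * lam ^ (2 * k)) (g₁ lam)) :
    ∀ R : ℝ, 0 < R → ∀ k : ℕ,
      ‖β k‖ ≤ (R ^ (2 * k))⁻¹ * (x * y) ^ ((n : ℝ) + 1 / 2) * (R / 2) ^ (2 * n) *
        Real.exp (R * (x + y)) / ((Nat.factorial n : ℝ)) ^ 2 := by
  have hg : g₁ = besselLogPart n x y := by
    rw [funext hg₁, funext hJn]
    rfl
  exact fun R hR k => bessel_log_part_coefficient_bound_general n hx.le (hx.le.trans hxy) hR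
    (fun lam _ => hg ▸ hβ lam) k
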